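/- Let G be the hosohedral-type group associated to pairs (m_1,ℓ_1),…,(m_h,ℓ_h), let Δ be the common image of the s_j(0,ℓ_j), and let p, q be nonzero integers. If ρ ∈ G satisfies ρ^p = Δ^q, then there exist j ∈ {1,…,h} and an element σ of the j-th factor subgroup of G with σ^p = Δ^q such that ρ is conjugate to σ in G. -/

import Mathlib

/-- The word `a_{j,i} a_{j,i+1} ⋯ a_{j,i+p-1}` (second indices mod `m j`) in the free group
on the disjoint union of the `ZMod (m j)`. -/
def hosoWord (h : ℕ) (m : Fin h → ℕ) (j : Fin h) (i : ZMod (m j)) (p : ℕ) :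
    FreeGroup (Σ j : Fin h, ZMod (m j)) :=
  ((List.range p).map (fun k => FreeGroup.of ⟨j, i + (k : ZMod (m j))⟩)).prod

/-- The defining relations of the hosohedral-type group associated to the pairs
`(m j, ℓ j)`: the circular relations `s_j(i, ℓ j) = s_j(i+1, ℓ j)` within each factor,
together with the identifications `s_j(0, ℓ j) = s_j'(0, ℓ j')` of the Garside elements. -/
def hosoRels (h : ℕ) (m ℓ : Fin h → ℕ) : Set (FreeGroup (Σ j : Fin h, ZMod (m j))) :=
  { r | (∃ (j : Fin h) (i : ZMod (m j)),
          r = hosoWord h m j i (ℓ j) * (hosoWord h m j (i + 1) (ℓ j))⁻¹) ∨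
        (∃ j j' : Fin h, r = hosoWord h m j 0 (ℓ j) * (hosoWord h m j' 0 (ℓ j'))⁻¹) }

/-- The hosohedral-type group associated to the pairs `(m j, ℓ j)`. -/
abbrev HosoGroup (h : ℕ) (m ℓ : Fin h → ℕ) := PresentedGroup (hosoRels h m ℓ)

/-- The generator `a_{j,i}` of the hosohedral-type group. -/
def hosoGen (h : ℕ) (m ℓ : Fin h → ℕ) (j : Fin h) (i : ZMod (m j)) : HosoGroup h m ℓ :=
  PresentedGroup.of ⟨j, i⟩

/-- The element `s_j(i,p) = a_{j,i} a_{j,i+1} ⋯ a_{j,i+p-1}` of the hosohedral-type group. -/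
def hosoS (h : ℕ) (m ℓ : Fin h → ℕ) (j : Fin h) (i : ZMod (m j)) (p : ℕ) :
    HosoGroup h m ℓ :=
  ((List.range p).map (fun k => hosoGen h m ℓ j (i + (k : ZMod (m j))))).prod

/-- The Garside element `Δ` of the hosohedral-type group, as the image of `s_j(0, ℓ j)`
(this is independent of `j` by the defining relations). -/
def hosoDelta (h : ℕ) (m ℓ : Fin h → ℕ) (j : Fin h) : HosoGroup h m ℓ :=
  hosoS h m ℓ j 0 (ℓ j)

/-- The `j`-th factor subgroup of the hosohedral-type group, generated by the
generators `a_{j,0}, …, a_{j, m_j - 1}`. -/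
def hosoFactor (h : ℕ) (m ℓ : Fin h → ℕ) (j : Fin h) : Subgroup (HosoGroup h m ℓ) :=
  Subgroup.closure (Set.range (hosoGen h m ℓ j))

namespace Monoid.PushoutI

variable {ι : Type*} {G : ι → Type*} {H : Type*} [∀ i, Group (G i)] [Group H]
  {φ : ∀ i, H →* G i}

/-- A list of letters from the factors is alternating if adjacent letters come from different
factors and no letter lies in the image of the base group. -/
def IsAlternating (φ : ∀ i, H →* G i) (L : List (Σ i, G i)) : Prop :=
  (L.IsChain fun a b => a.1 ≠ b.1) ∧ ∀ a ∈ L, a.2 ∉ (φ a.1).range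

/-- The product in the pushout of a list of letters from the factors. -/
def listProd (φ : ∀ i, H →* G i) (L : List (Σ i, G i)) : PushoutI φ :=
  (L.map fun a => of a.1 a.2).prod

@[simp]
theorem listProd_nil : listProd φ [] = 1 := rfl

@[simp]
theorem listProd_cons (a : Σ i, G i) (L : List (Σ i, G i)) :
    listProd φ (a :: L) = of a.1 a.2 * listProd φ L := by
  simp [listProd]

@[simp]
theorem listProd_append (L L' : List (Σ i, G i)) :
    listProd φ (L ++ L') = listProd φ L * listProd φ L' := by
  simp [listProd]

/-- The formal inverse of a list of letters. -/
def listInv (L : List (Σ i, G i)) : List (Σ i, G i) :=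
  (L.map fun a => ⟨a.1, a.2⁻¹⟩).reverse

@[simp]
theorem listProd_listInv (L : List (Σ i, G i)) :
    listProd φ (listInv L) = (listProd φ L)⁻¹ := by
  induction L with
  | nil => simp [listInv]
  | cons a L ih =>
    rw [listProd_cons, mul_inv_rev, ← ih]
    simp [listInv]

theorem IsAlternating.of_cons {a : Σ i, G i} {L : List (Σ i, G i)}
    (h : IsAlternating φ (a :: L)) : IsAlternating φ L :=
  ⟨h.1.tail, fun b hb => h.2 b (List.mem_cons_of_mem _ hb)⟩

theorem IsAlternating.of_append_left {L L' : List (Σ i, G i)}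
    (h : IsAlternating φ (L ++ L')) : IsAlternating φ L :=
  ⟨h.1.left_of_append, fun b hb => h.2 b (List.mem_append_left _ hb)⟩

theorem IsAlternating.append {L L' : List (Σ i, G i)} (h : IsAlternating φ L)
    (h' : IsAlternating φ L') (hne : ∀ a ∈ L.getLast?, ∀ b ∈ L'.head?, a.1 ≠ b.1) :
    IsAlternating φ (L ++ L') :=
  ⟨h.1.append h'.1 hne, fun a ha => (List.mem_append.1 ha).elim (h.2 a) (h'.2 a)⟩

theorem IsAlternating.cons_of_fst_eq {i : ι} {g g' : G i} {L : List (Σ i, G i)}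
    (h : IsAlternating φ (⟨i, g⟩ :: L)) (hg : g' ∉ (φ i).range) :
    IsAlternating φ (⟨i, g'⟩ :: L) := by
  refine ⟨?_, ?_⟩
  · have := h.1
    rw [List.isChain_cons] at this ⊢
    exact this
  · intro a ha
    rcases List.mem_cons.1 ha with rfl | ha
    · exact hg
    · exact h.of_cons.2 a ha

theorem IsAlternating.listInv {L : List (Σ i, G i)} (h : IsAlternating φ L) :
    IsAlternating φ (listInv L) := by
  refine ⟨?_, ?_⟩
  · rw [PushoutI.listInv, List.isChain_reverse, List.isChain_map]
    exact h.1.imp fun a b hab => hab.symm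
  · intro a ha
    simp only [PushoutI.listInv, List.mem_reverse, List.mem_map] at ha
    obtain ⟨b, hb, rfl⟩ := ha
    simpa using h.2 b hb

theorem IsAlternating.listProd_notMem_range (hφ : ∀ i, Function.Injective (φ i))
    {L : List (Σ i, G i)} (h : IsAlternating φ L) (hL : L ≠ []) :
    listProd φ L ∉ (base φ).range := by
  intro hmem
  let w : CoprodI.Word G :=
    ⟨L, fun a ha h1 => h.2 a ha (h1 ▸ one_mem _), h.1⟩
  have hw : Reduced φ w := h.2
  have hprod : ofCoprodI w.prod = listProd φ L := by
    simp only [CoprodI.Word.prod, listProd, map_list_prod, List.map_map, w]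
    congr 1
  have := hw.eq_empty_of_mem_range hφ (hprod ▸ hmem)
  exact hL (congrArg CoprodI.Word.toList this)

theorem exists_eq_base_mul_listProd (hφ : ∀ i, Function.Injective (φ i)) (x : PushoutI φ) :
    ∃ (y : H) (L : List (Σ i, G i)), IsAlternating φ L ∧ x = base φ y * listProd φ L := by
  classical
  obtain ⟨d⟩ := NormalWord.transversal_nonempty φ hφ
  obtain ⟨w, rfl⟩ := (NormalWord.equiv (d := d)).symm.surjective x
  refine ⟨w.head, w.toList, ⟨w.chain_ne, fun a ha hr => w.ne_one a ha ?_⟩, ?_⟩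
  · exact congrArg Subtype.val (congrArg Prod.snd (@(d.compl a.1).1
      (⟨1, one_mem _⟩, ⟨a.2, w.normalized _ _ ha⟩) (⟨a.2, hr⟩, ⟨1, d.one_mem _⟩) (by simp)))
  · change NormalWord.prod w = _
    simp only [NormalWord.prod, CoprodI.Word.prod, listProd, map_list_prod, List.map_map]
    congr 2

theorem IsAlternating.flatten_replicate {L : List (Σ i, G i)} (h : IsAlternating φ L)
    (hc : ∀ a ∈ L.getLast?, ∀ b ∈ L.head?, a.1 ≠ b.1) (n : ℕ) :
    IsAlternating φ (List.replicate n L).flatten := by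
  induction n with
  | zero => exact ⟨by simp, by simp⟩
  | succ n ih =>
    rw [List.replicate_succ, List.flatten_cons]
    refine h.append ih fun a ha b hb => hc a ha b ?_
    cases n with
    | zero => simp at hb
    | succ n =>
      cases L with
      | nil => simp at ha
      | cons c L => simpa [List.replicate_succ] using hb

theorem listProd_flatten_replicate (L : List (Σ i, G i)) (n : ℕ) :
    listProd φ (List.replicate n L).flatten = listProd φ L ^ n := by
  induction n with
  | zero => simp
  | succ n ih => simp [List.replicate_succ, ih, pow_succ']

/-- Every element of the pushout is conjugate to an element of a factor or to the product of a
cyclically alternating list. -/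
theorem isConj_of_or_isConj_listProd [Nonempty ι] (n : ℕ) :
    ∀ (L : List (Σ i, G i)) (y : H) (x : PushoutI φ), L.length ≤ n → IsAlternating φ L →
      IsConj x (base φ y * listProd φ L) →
      (∃ (i : ι) (g : G i), IsConj x (of i g)) ∨
      ∃ L' : List (Σ i, G i), L' ≠ [] ∧ IsAlternating φ L' ∧
        (∀ a ∈ L'.getLast?, ∀ b ∈ L'.head?, a.1 ≠ b.1) ∧ IsConj x (listProd φ L') := by
  induction n with
  | zero =>
    intro L y x hL _ hx
    obtain rfl : L = [] := List.length_eq_zero_iff.1 (Nat.le_zero.1 hL)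
    obtain ⟨i⟩ := ‹Nonempty ι›
    exact .inl ⟨i, φ i y, by simpa [of_apply_eq_base] using hx⟩
  | succ n ih =>
    rintro (_ | ⟨⟨i, g⟩, L⟩) y x hL hA hx
    · obtain ⟨i⟩ := ‹Nonempty ι›
      exact .inl ⟨i, φ i y, by simpa [of_apply_eq_base] using hx⟩
    have hg : φ i y * g ∉ (φ i).range := by
      rw [Subgroup.mul_mem_cancel_left _ (MonoidHom.mem_range.2 ⟨y, rfl⟩)]
      exact hA.2 _ List.mem_cons_self
    have hA' := hA.cons_of_fst_eq hg
    replace hx : IsConj x (of i (φ i y * g) * listProd φ L) := by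
      simpa [of_apply_eq_base, mul_assoc] using hx
    generalize φ i y * g = g' at hg hA' hx
    rcases List.eq_nil_or_concat L with rfl | ⟨M, ⟨k, b⟩, rfl⟩
    · exact .inl ⟨i, g', by simpa using hx⟩
    rw [List.concat_eq_append, ← List.cons_append] at hA'
    rw [List.concat_eq_append] at hx
    by_cases hik : k = i
    · subst hik
      have hx' : IsConj x (of k (b * g') * listProd φ M) := by
        refine hx.trans (isConj_iff.2 ⟨of k b, ?_⟩)
        simp [mul_assoc]
      have hM : IsAlternating φ (⟨k, g'⟩ :: M) := hA'.of_append_left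
      by_cases hb : b * g' ∈ (φ k).range
      · obtain ⟨z, hz⟩ := hb
        refine ih M z x (by simp at hL; lia) hM.of_cons ?_
        rwa [← hz, of_apply_eq_base] at hx'
      · refine ih (⟨k, b * g'⟩ :: M) 1 x (by simp at hL ⊢; lia) (hM.cons_of_fst_eq hb) ?_
        simpa using hx'
    · refine .inr ⟨_, by simp, hA', fun a ha b hb => ?_, by simpa using hx⟩
      rw [List.getLast?_concat, Option.mem_some_iff] at ha
      rw [List.cons_append, List.head?_cons, Option.mem_some_iff] at hb
      subst ha hb
      exact hik

/-- An element of the pushout with a positive power all of whose conjugates lie in the base group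
is conjugate into a factor. -/
theorem exists_isConj_of [Nonempty ι] (hφ : ∀ i, Function.Injective (φ i)) {x : PushoutI φ}
    {n : ℕ} (hn : n ≠ 0) (hx : ∀ c : PushoutI φ, c * x ^ n * c⁻¹ ∈ (base φ).range) :
    ∃ (i : ι) (g : G i), IsConj x (of i g) := by
  obtain ⟨y, L, hL, hxL⟩ := exists_eq_base_mul_listProd hφ x
  refine (isConj_of_or_isConj_listProd L.length L y x le_rfl hL
    (hxL ▸ IsConj.refl _)).resolve_right ?_
  rintro ⟨L', hne, hL', hc, hconj⟩
  obtain ⟨c, hc'⟩ := isConj_iff.1 hconj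
  refine (hL'.flatten_replicate hc n).listProd_notMem_range hφ ?_ ?_
  · simpa [hn] using hne
  · rw [listProd_flatten_replicate, ← hc', conj_pow]
    exact hx c

/-- If `x` is conjugate into a factor and `x ^ p` lies in the base group, then `x` is conjugate to
an element of a factor whose `p`-th power lies in the base group. -/
theorem exists_isConj_of_zpow_mem_range_of_listProd (hφ : ∀ i, Function.Injective (φ i))
    {x : PushoutI φ} {p : ℤ} (hx : x ^ p ∈ (base φ).range) (L : List (Σ i, G i)) :
    ∀ (j : ι) (g : G j), IsAlternating φ L → listProd φ L * of j g * (listProd φ L)⁻¹ = x →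
      ∃ (k : ι) (g' : G k), IsConj x (of k g') ∧ g' ^ p ∈ (φ k).range := by
  induction L using List.reverseRecOn with
  | nil =>
    intro j g _ hg
    by_cases hgp : g ^ p ∈ (φ j).range
    · exact ⟨j, g, IsConj.symm (isConj_iff.2 ⟨_, hg⟩), hgp⟩
    · have hA : IsAlternating φ [⟨j, g ^ p⟩] := ⟨by simp, by simpa using hgp⟩
      refine absurd ?_ (hA.listProd_notMem_range hφ (by simp))
      simpa [← hg] using hx
  | append_singleton L b ih =>
    obtain ⟨k, b⟩ := b
    intro j g hL hg
    by_cases hkj : k = j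
    · subst hkj
      refine ih k (b * g * b⁻¹) hL.of_append_left ?_
      rw [← hg]
      simp [mul_assoc]
    by_cases hgp : g ^ p ∈ (φ j).range
    · exact ⟨j, g, IsConj.symm (isConj_iff.2 ⟨_, hg⟩), hgp⟩
    have hA : IsAlternating φ ((L ++ [⟨k, b⟩]) ++ ([⟨j, g ^ p⟩] ++ listInv (L ++ [⟨k, b⟩]))) := by
      refine hL.append (IsAlternating.append ⟨by simp, by simpa using hgp⟩ hL.listInv ?_) ?_
      · simpa [PushoutI.listInv] using Ne.symm hkj
      · simpa using hkj
    refine absurd ?_ (hA.listProd_notMem_range hφ (by simp))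
    rw [← hg, conj_zpow, ← map_zpow] at hx
    rw [listProd_append, listProd_append _ (listInv _), listProd_listInv, ← mul_assoc]
    simpa only [listProd_cons, listProd_nil, mul_one] using hx

/-- If `x ^ p = base y` with a power of `y` central in every factor, and the base group is detected
by a homomorphism to a commutative group, then `x` is conjugate to an element of a factor with the
same `p`-th power. -/
theorem exists_isConj_of_zpow_eq_base [Nonempty ι] (hφ : ∀ i, Function.Injective (φ i))
    {Γ : Type*} [CommGroup Γ] (deg : PushoutI φ →* Γ)
    (hdeg : Function.Injective (deg.comp (base φ))) {x : PushoutI φ} {y : H} {p : ℤ} (hp : p ≠ 0)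
    (hx : x ^ p = base φ y) {N : ℕ} (hN : N ≠ 0)
    (hc : ∀ (i : ι) (g : G i), Commute g (φ i (y ^ N))) :
    ∃ (i : ι) (g : G i), IsConj x (of i g) ∧ g ^ p = φ i y := by
  have hcentral : ∀ c : PushoutI φ, Commute c (base φ (y ^ N)) := by
    intro c
    induction c using PushoutI.induction_on with
    | of i g =>
      rw [← of_apply_eq_base φ i]
      exact (hc i g).map _
    | base z =>
      obtain ⟨i⟩ := ‹Nonempty ι›
      rw [← of_apply_eq_base φ i, ← of_apply_eq_base φ i]
      exact (hc i (φ i z)).map _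
    | mul a b ha hb => exact ha.mul_left hb
  have hpow : ∃ z : H, x ^ (p.natAbs * N) = base φ z ∧ ∀ c : PushoutI φ, Commute c (base φ z) := by
    obtain ⟨n, rfl | rfl⟩ := Int.eq_nat_or_neg p
    · refine ⟨y ^ N, ?_, hcentral⟩
      rw [map_pow, ← hx]
      simp [pow_mul]
    · refine ⟨(y ^ N)⁻¹, ?_, fun c => ?_⟩
      · rw [map_inv, map_pow, ← hx]
        simp [pow_mul]
      · rw [map_inv]
        exact (hcentral c).inv_right
  obtain ⟨z, hz, hzc⟩ := hpow
  obtain ⟨j, g, hg⟩ := exists_isConj_of hφ (x := x) (n := p.natAbs * N)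
    (mul_ne_zero (Int.natAbs_ne_zero.2 hp) hN) fun c => by
      rw [hz, (hzc c).eq, mul_inv_cancel_right]
      exact ⟨z, rfl⟩
  obtain ⟨c, hc⟩ := isConj_iff.1 hg.symm
  obtain ⟨z', L, hL, rfl⟩ := exists_eq_base_mul_listProd hφ c
  have hx' : IsConj x ((base φ z')⁻¹ * x * ((base φ z')⁻¹)⁻¹) := isConj_iff.2 ⟨_, rfl⟩
  obtain ⟨k, g', hconj, y', hy'⟩ := exists_isConj_of_zpow_mem_range_of_listProd hφ (p := p)
    (x := (base φ z')⁻¹ * x * ((base φ z')⁻¹)⁻¹)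
    ⟨z'⁻¹ * y * z', by rw [conj_zpow, hx]; simp⟩ L j g hL (by rw [← hc]; simp [mul_assoc])
  refine ⟨k, g', hx'.trans hconj, ?_⟩
  have h := isConj_iff_eq.1 ((deg.map_isConj (hx'.trans hconj)))
  have hyy : y = y' := hdeg <| by
    rw [MonoidHom.comp_apply, MonoidHom.comp_apply, ← hx, ← of_apply_eq_base φ k, hy', map_zpow,
      map_zpow, map_zpow, h]
  rw [hyy, hy']

end Monoid.PushoutI

/-- The product `a i * a (i + 1) * ⋯ * a (i + p - 1)` of a cyclically indexed family. -/
def cyclicProd {Γ : Type*} [Monoid Γ] {n : ℕ} (a : ZMod n → Γ) (i : ZMod n) (p : ℕ) : Γ :=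
  ((List.range p).map fun k : ℕ => a (i + (k : ZMod n))).prod

section cyclicProd

variable {Γ Γ' : Type*} {n : ℕ}

theorem map_cyclicProd [Monoid Γ] [Monoid Γ'] (f : Γ →* Γ') (a : ZMod n → Γ) (i : ZMod n)
    (p : ℕ) : f (cyclicProd a i p) = cyclicProd (fun k => f (a k)) i p := by
  simp only [cyclicProd, map_list_prod, List.map_map]
  rfl

theorem cyclicProd_const [Monoid Γ] (c : Γ) (i : ZMod n) (p : ℕ) :
    cyclicProd (fun _ => c) i p = c ^ p := by
  simp [cyclicProd]

theorem mul_cyclicProd [Monoid Γ] (a : ZMod n → Γ) (i : ZMod n) (p : ℕ) :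
    a i * cyclicProd a (i + 1) p = cyclicProd a i p * a (i + p) := by
  have h₁ : cyclicProd a i (p + 1) = a i * cyclicProd a (i + 1) p := by
    simp only [cyclicProd, List.range_succ_eq_map, List.map_cons, List.prod_cons, List.map_map]
    congr 2
    · simp
    · refine List.map_congr_left fun k _ => ?_
      simp only [Function.comp_apply, Nat.succ_eq_add_one]
      congr 1
      push_cast
      ring
  have h₂ : cyclicProd a i (p + 1) = cyclicProd a i p * a (i + p) := by
    simp [cyclicProd, List.range_succ]
  rw [← h₁, h₂]

theorem cyclicProd_eq_zero_index [Monoid Γ] [NeZero n] {a : ZMod n → Γ} {ℓ : ℕ}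
    (ha : ∀ i, cyclicProd a i ℓ = cyclicProd a (i + 1) ℓ) (i : ZMod n) :
    cyclicProd a i ℓ = cyclicProd a 0 ℓ := by
  obtain ⟨k, rfl⟩ := ZMod.natCast_zmod_surjective i
  induction k with
  | zero => simp
  | succ k ih => rw [Nat.cast_succ, ← ha, ih]

theorem mul_cyclicProd_pow [Monoid Γ] [NeZero n] {a : ZMod n → Γ} {ℓ : ℕ}
    (ha : ∀ i, cyclicProd a i ℓ = cyclicProd a (i + 1) ℓ) (i : ZMod n) (k : ℕ) :
    a i * cyclicProd a 0 ℓ ^ k = cyclicProd a 0 ℓ ^ k * a (i + k * ℓ) := by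
  induction k generalizing i with
  | zero => simp
  | succ k ih =>
    have h := mul_cyclicProd a i ℓ
    rw [cyclicProd_eq_zero_index ha, cyclicProd_eq_zero_index ha i] at h
    rw [pow_succ', ← mul_assoc, h, mul_assoc, ih, ← mul_assoc]
    congr 2
    push_cast
    ring

theorem commute_cyclicProd_pow [Monoid Γ] [NeZero n] {a : ZMod n → Γ} {ℓ : ℕ}
    (ha : ∀ i, cyclicProd a i ℓ = cyclicProd a (i + 1) ℓ) (i : ZMod n) {k : ℕ} (hk : n ∣ k) :
    Commute (a i) (cyclicProd a 0 ℓ ^ k) := by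
  have h := mul_cyclicProd_pow ha i k
  rwa [(ZMod.natCast_eq_zero_iff k n).2 hk, zero_mul, add_zero] at h

end cyclicProd

/-- The defining relations `s(i, ℓ) = s(i + 1, ℓ)` of a single factor. -/
def circularRels (n ℓ : ℕ) : Set (FreeGroup (ZMod n)) :=
  {r | ∃ i, r = cyclicProd FreeGroup.of i ℓ * (cyclicProd FreeGroup.of (i + 1) ℓ)⁻¹}

/-- The circular group with generators indexed by `ZMod n` and relations
`s(i, ℓ) = s(i + 1, ℓ)`. -/
abbrev CircularGroup (n ℓ : ℕ) := PresentedGroup (circularRels n ℓ)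

namespace CircularGroup

variable {n ℓ : ℕ} {Γ : Type*} [Group Γ]

/-- The homomorphism out of a circular group given by a family satisfying its relations. -/
def lift (a : ZMod n → Γ) (ha : ∀ i, cyclicProd a i ℓ = cyclicProd a (i + 1) ℓ) :
    CircularGroup n ℓ →* Γ :=
  PresentedGroup.toGroup (f := a) <| by
    rintro _ ⟨i, rfl⟩
    simp only [map_mul, map_inv, map_cyclicProd, FreeGroup.lift_apply_of]
    rw [ha i, mul_inv_cancel]

@[simp]
theorem lift_of (a : ZMod n → Γ) (ha : ∀ i, cyclicProd a i ℓ = cyclicProd a (i + 1) ℓ)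
    (i : ZMod n) : lift a ha (PresentedGroup.of i) = a i :=
  PresentedGroup.toGroup.of _

/-- The Garside element of a circular group. -/
def delta (n ℓ : ℕ) : CircularGroup n ℓ := cyclicProd PresentedGroup.of 0 ℓ

theorem cyclicProd_of (i : ZMod n) :
    cyclicProd (PresentedGroup.of : _ → CircularGroup n ℓ) i ℓ =
      cyclicProd PresentedGroup.of (i + 1) ℓ := by
  have h := PresentedGroup.mk_eq_mk_of_mul_inv_mem (rels := circularRels n ℓ) ⟨i, rfl⟩
  simp only [map_cyclicProd] at h
  exact h

theorem lift_delta (a : ZMod n → Γ) (ha : ∀ i, cyclicProd a i ℓ = cyclicProd a (i + 1) ℓ) :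
    lift a ha (delta n ℓ) = cyclicProd a 0 ℓ := by
  simp [delta, map_cyclicProd]

theorem commute_delta_pow [NeZero n] {k : ℕ} (hk : n ∣ k) (g : CircularGroup n ℓ) :
    Commute g (delta n ℓ ^ k) := by
  have h : g ∈ Subgroup.centralizer {delta n ℓ ^ k} := by
    refine PresentedGroup.generated_by _ _ (fun i => ?_) g
    rw [Subgroup.mem_centralizer_singleton_iff]
    exact commute_cyclicProd_pow cyclicProd_of i hk
  exact Subgroup.mem_centralizer_singleton_iff.1 h

/-- The degree homomorphism, normalized so that the Garside element has degree `1`. -/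
def deg (n ℓ : ℕ) : CircularGroup n ℓ →* Multiplicative ℚ :=
  lift (fun _ => Multiplicative.ofAdd (ℓ : ℚ)⁻¹) fun i => by simp only [cyclicProd_const]

theorem deg_delta (hℓ : 0 < ℓ) : deg n ℓ (delta n ℓ) = Multiplicative.ofAdd 1 := by
  have : (ℓ : ℚ) ≠ 0 := by positivity
  rw [deg, lift_delta, cyclicProd_const, ← ofAdd_nsmul]
  simp [this]

theorem deg_comp_zpowersHom_delta (hℓ : 0 < ℓ) :
    (deg n ℓ).comp (zpowersHom _ (delta n ℓ)) =
      zpowersHom _ (Multiplicative.ofAdd (1 : ℚ)) := by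
  ext
  simp [deg_delta hℓ]

end CircularGroup

theorem zpowersHom_ofAdd_one_injective :
    Function.Injective (zpowersHom _ (Multiplicative.ofAdd (1 : ℚ))) := by
  intro x y hxy
  have h : ((x.toAdd : ℤ) : ℚ) = y.toAdd := by
    simpa [zpowersHom_apply, ← ofAdd_zsmul] using hxy
  exact Int.cast_injective h

namespace HosoGroup

open Monoid PushoutI

variable {h : ℕ} {m ℓ : Fin h → ℕ}

theorem hosoWord_eq_cyclicProd (j : Fin h) (i : ZMod (m j)) (p : ℕ) :
    hosoWord h m j i p = cyclicProd (fun k => FreeGroup.of ⟨j, k⟩) i p :=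
  rfl

theorem hosoDelta_eq_cyclicProd (j : Fin h) :
    hosoDelta h m ℓ j = cyclicProd (hosoGen h m ℓ j) 0 (ℓ j) := by
  simp only [hosoDelta, hosoS, cyclicProd, List.bind_eq_flatMap, List.pure_def,
    ← List.map_eq_flatMap, List.map_map]
  rfl

theorem mk_hosoWord (j : Fin h) (i : ZMod (m j)) (p : ℕ) :
    PresentedGroup.mk (hosoRels h m ℓ) (hosoWord h m j i p) =
      cyclicProd (hosoGen h m ℓ j) i p := by
  rw [hosoWord_eq_cyclicProd, map_cyclicProd]
  rfl

theorem cyclicProd_hosoGen (j : Fin h) (i : ZMod (m j)) :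
    cyclicProd (hosoGen h m ℓ j) i (ℓ j) = cyclicProd (hosoGen h m ℓ j) (i + 1) (ℓ j) := by
  rw [← mk_hosoWord, ← mk_hosoWord]
  exact PresentedGroup.mk_eq_mk_of_mul_inv_mem (.inl ⟨j, i, rfl⟩)

theorem hosoDelta_eq (j j' : Fin h) : hosoDelta h m ℓ j = hosoDelta h m ℓ j' := by
  rw [hosoDelta_eq_cyclicProd, hosoDelta_eq_cyclicProd, ← mk_hosoWord, ← mk_hosoWord]
  exact PresentedGroup.mk_eq_mk_of_mul_inv_mem (.inr ⟨j, j', rfl⟩)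

/-- The inclusions of the infinite cyclic group generated by `Δ` into the factors. -/
def deltaHom (m ℓ : Fin h → ℕ) (j : Fin h) :
    Multiplicative ℤ →* CircularGroup (m j) (ℓ j) :=
  zpowersHom _ (CircularGroup.delta (m j) (ℓ j))

/-- The canonical homomorphism from a circular group onto the corresponding factor subgroup. -/
def factorHom (m ℓ : Fin h → ℕ) (j : Fin h) : CircularGroup (m j) (ℓ j) →* HosoGroup h m ℓ :=
  CircularGroup.lift (hosoGen h m ℓ j) (cyclicProd_hosoGen j)

theorem factorHom_mem_hosoFactor (j : Fin h) (g : CircularGroup (m j) (ℓ j)) :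
    factorHom m ℓ j g ∈ hosoFactor h m ℓ j := by
  refine PresentedGroup.generated_by _ ((hosoFactor h m ℓ j).comap (factorHom m ℓ j))
    (fun i => ?_) g
  rw [Subgroup.mem_comap, factorHom, CircularGroup.lift_of]
  exact Subgroup.subset_closure ⟨i, rfl⟩

theorem factorHom_delta (j : Fin h) :
    factorHom m ℓ j (CircularGroup.delta (m j) (ℓ j)) = hosoDelta h m ℓ j := by
  rw [factorHom, CircularGroup.lift_delta, hosoDelta_eq_cyclicProd]

/-- The homomorphism from the amalgamated product of the circular groups over `⟨Δ⟩`. -/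
def ofPushout (m ℓ : Fin h → ℕ) (j₀ : Fin h) : PushoutI (deltaHom m ℓ) →* HosoGroup h m ℓ :=
  PushoutI.lift (factorHom m ℓ) (zpowersHom _ (hosoDelta h m ℓ j₀)) fun j => by
    ext
    simp [deltaHom, factorHom_delta, hosoDelta_eq j j₀]

theorem of_delta (j : Fin h) :
    of (φ := deltaHom m ℓ) j (CircularGroup.delta (m j) (ℓ j)) =
      base (deltaHom m ℓ) (Multiplicative.ofAdd 1) := by
  rw [← of_apply_eq_base _ j]
  simp [deltaHom]

/-- The homomorphism to the amalgamated product of the circular groups over `⟨Δ⟩`. -/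
def toPushout (m ℓ : Fin h → ℕ) : HosoGroup h m ℓ →* PushoutI (deltaHom m ℓ) :=
  PresentedGroup.toGroup (f := fun x : Σ j, ZMod (m j) => of x.1 (PresentedGroup.of x.2)) <| by
    have hword (j : Fin h) (i : ZMod (m j)) :
        FreeGroup.lift (fun x : Σ j, ZMod (m j) =>
          of (φ := deltaHom m ℓ) x.1 (PresentedGroup.of x.2)) (hosoWord h m j i (ℓ j)) =
          of j (cyclicProd PresentedGroup.of i (ℓ j)) := by
      simp only [hosoWord_eq_cyclicProd, map_cyclicProd, FreeGroup.lift_apply_of]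
    rintro _ (⟨j, i, rfl⟩ | ⟨j, j', rfl⟩)
    · rw [map_mul, map_inv, hword, hword, CircularGroup.cyclicProd_of, mul_inv_cancel]
    · rw [map_mul, map_inv, hword, hword]
      exact mul_inv_eq_one.2 ((of_delta j).trans (of_delta j').symm)

theorem toPushout_hosoGen (j : Fin h) (i : ZMod (m j)) :
    toPushout m ℓ (hosoGen h m ℓ j i) = of j (PresentedGroup.of i) :=
  PresentedGroup.toGroup.of _

theorem ofPushout_toPushout (j₀ : Fin h) (x : HosoGroup h m ℓ) :
    ofPushout m ℓ j₀ (toPushout m ℓ x) = x := by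
  refine DFunLike.congr_fun (f := (ofPushout m ℓ j₀).comp (toPushout m ℓ))
    (g := MonoidHom.id _) (PresentedGroup.ext fun y => ?_) x
  change ofPushout m ℓ j₀ (toPushout m ℓ (hosoGen h m ℓ y.1 y.2)) = hosoGen h m ℓ y.1 y.2
  rw [toPushout_hosoGen]
  simp [ofPushout, factorHom]

theorem toPushout_hosoDelta (j : Fin h) :
    toPushout m ℓ (hosoDelta h m ℓ j) =
      base (deltaHom m ℓ) (Multiplicative.ofAdd 1) := by
  rw [hosoDelta_eq_cyclicProd, ← of_delta j, CircularGroup.delta]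
  simp only [map_cyclicProd, toPushout_hosoGen]

end HosoGroup

/-- Every `(p,q)`-periodic element of a hosohedral-type group is conjugate to a
`(p,q)`-periodic element of one of the factor subgroups. -/
theorem periodic_hoso_in_factor (h : ℕ) (m ℓ : Fin h → ℕ) (hh : 0 < h)
    (hm : ∀ j, 0 < m j) (hℓ : ∀ j, 0 < ℓ j) (hne : ∀ j, (m j, ℓ j) ≠ (1, 1))
    (p q : ℤ) (hp : p ≠ 0) (hq : q ≠ 0) (ρ : HosoGroup h m ℓ)
    (hρ : ρ ^ p = (hosoDelta h m ℓ ⟨0, hh⟩) ^ q) :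
    ∃ (j : Fin h) (σ : HosoGroup h m ℓ), σ ∈ hosoFactor h m ℓ j ∧
      σ ^ p = (hosoDelta h m ℓ ⟨0, hh⟩) ^ q ∧ IsConj ρ σ := by
  have : Nonempty (Fin h) := ⟨⟨0, hh⟩⟩
  have (j : Fin h) : NeZero (m j) := ⟨(hm j).ne'⟩
  have hdeg (j : Fin h) : (CircularGroup.deg (m j) (ℓ j)).comp (HosoGroup.deltaHom m ℓ j) =
      zpowersHom _ (Multiplicative.ofAdd (1 : ℚ)) :=
    CircularGroup.deg_comp_zpowersHom_delta (hℓ j)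
  have hinj (j : Fin h) : Function.Injective (HosoGroup.deltaHom m ℓ j) := by
    refine Function.Injective.of_comp (f := CircularGroup.deg (m j) (ℓ j)) ?_
    rw [← MonoidHom.coe_comp, hdeg]
    exact zpowersHom_ofAdd_one_injective
  have hx : HosoGroup.toPushout m ℓ ρ ^ p =
      Monoid.PushoutI.base (HosoGroup.deltaHom m ℓ) (Multiplicative.ofAdd 1 ^ q) := by
    rw [← map_zpow, hρ, map_zpow, map_zpow, HosoGroup.toPushout_hosoDelta]
  obtain ⟨j, g, hconj, hg⟩ := Monoid.PushoutI.exists_isConj_of_zpow_eq_base hinj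
    (Monoid.PushoutI.lift (fun j => CircularGroup.deg (m j) (ℓ j)) _ hdeg)
    (by
      convert zpowersHom_ofAdd_one_injective using 2
      ext
      simp)
    hp hx (N := ∏ j, m j) (Finset.prod_ne_zero_iff.2 fun j _ => (hm j).ne') fun j g => by
      have h := (CircularGroup.commute_delta_pow (ℓ := ℓ j)
        (Finset.dvd_prod_of_mem m (Finset.mem_univ j)) g).zpow_right q
      have hpow : HosoGroup.deltaHom m ℓ j ((Multiplicative.ofAdd 1 ^ q) ^ ∏ j, m j) =
          (CircularGroup.delta (m j) (ℓ j) ^ ∏ j, m j) ^ q := by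
        rw [map_pow, map_zpow, HosoGroup.deltaHom, zpowersHom_apply, toAdd_ofAdd, zpow_one,
          ← zpow_natCast, ← zpow_natCast, zpow_comm]
      rwa [hpow]
  refine ⟨j, HosoGroup.factorHom m ℓ j g, HosoGroup.factorHom_mem_hosoFactor j g, ?_, ?_⟩
  · rw [← map_zpow, hg, HosoGroup.hosoDelta_eq _ j, ← HosoGroup.factorHom_delta, map_zpow,
      map_zpow, HosoGroup.deltaHom, zpowersHom_apply, toAdd_ofAdd, zpow_one]
  · have h := (HosoGroup.ofPushout m ℓ ⟨0, hh⟩).map_isConj hconj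
    rwa [HosoGroup.ofPushout_toPushout, HosoGroup.ofPushout, Monoid.PushoutI.lift_of] at h
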